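/- (Palais–Smale compactness for large λ.) Assume N ≥ 2, 0 < α < N, p > (N+α)/N, and that the potential a satisfies (A₁) and (A₂). For every c* > 0 there exists λ* > 0 such that for all λ ≥ λ* and all c ≤ c*, every (PS)_c sequence {u_n} ⊂ E_λ for J_λ has a subsequence that converges in the E_λ-norm to some u ∈ E_λ. -/

import Mathlib

open scoped BigOperators ENNReal
open Filter

noncomputable section

namespace Choquard

variable {G : Type*}

/-- The word metric on a group with generating set `S`. -/
def wordDist [Group G] (S : Finset G) (x y : G) : ℕ :=
  sInf {k : ℕ | ∃ l : List G, (∀ g ∈ l, g ∈ S) ∧ l.length = k ∧ x⁻¹ * y = l.prod}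

/-- The closed ball of radius `r` about `c` in the word metric. -/
def ball [Group G] (S : Finset G) (c : G) (r : ℝ) : Set G :=
  {x | (wordDist S x c : ℝ) ≤ r}

/-- Polynomial growth of homogeneous dimension `N`. -/
def PolyGrowth [Group G] (S : Finset G) (N : ℕ) : Prop :=
  ∃ C₁ C₂ : ℝ, 0 < C₁ ∧ 0 < C₂ ∧ ∀ r : ℝ, 1 ≤ r →
    C₁ * r ^ N ≤ ((ball S (1 : G) r).ncard : ℝ) ∧
    ((ball S (1 : G) r).ncard : ℝ) ≤ C₂ * r ^ N

/-- Riesz-type asymptotics for the kernel `R`. -/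
def RieszKernel [Group G] (S : Finset G) (N : ℕ) (α : ℝ) (R : G → G → ℝ) : Prop :=
  (∀ x y, 0 < R x y) ∧
  ∃ c₁ c₂ : ℝ, 0 < c₁ ∧ 0 < c₂ ∧ ∀ x y : G, x ≠ y →
    c₁ * (wordDist S x y : ℝ) ^ (α - (N : ℝ)) ≤ R x y ∧
    R x y ≤ c₂ * (wordDist S x y : ℝ) ^ (α - (N : ℝ))

/-- Convolution `(R ∗ f)(x) = Σ_{y ≠ x} R x y f y`. -/
def conv [DecidableEq G] (R : G → G → ℝ) (f : G → ℝ) (x : G) : ℝ :=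
  ∑' y, if y = x then 0 else R x y * f y

/-- The convolution as an extended-nonnegative-real valued sum. -/
def convE [DecidableEq G] (R : G → G → ℝ) (f : G → ℝ) (x : G) : ℝ≥0∞ :=
  ∑' y, if y = x then 0 else ENNReal.ofReal (R x y * f y)

/-- Membership in `ℓ^q(G)`. -/
def Memlp (q : ℝ) (u : G → ℝ) : Prop := Summable fun x => |u x| ^ q

/-- The `ℓ^q` norm. -/
def lpNorm (q : ℝ) (u : G → ℝ) : ℝ := (∑' x, |u x| ^ q) ^ (1 / q)

/-- The `ℓ^∞` norm. -/
def supNorm (u : G → ℝ) : ℝ := ⨆ x, |u x|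

/-- The graph Laplacian `Δu(x) = Σ_{s ∈ S} (u(xs) - u(x))`. -/
def lap [Group G] (S : Finset G) (u : G → ℝ) (x : G) : ℝ :=
  ∑ s ∈ S, (u (x * s) - u x)

/-- The gradient form `∇u∇v(x) = (1/2) Σ_{s ∈ S} (u(xs)-u(x))(v(xs)-v(x))`. -/
def grad [Group G] (S : Finset G) (u v : G → ℝ) (x : G) : ℝ :=
  (1 / 2) * ∑ s ∈ S, (u (x * s) - u x) * (v (x * s) - v x)

/-- The density `|Δu|² + |∇u|² + (1 + λa)u²`. -/
def eDensity [Group G] (S : Finset G) (a : G → ℝ) (lam : ℝ) (u : G → ℝ) (x : G) : ℝ :=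
  (lap S u x) ^ 2 + grad S u u x + (1 + lam * a x) * (u x) ^ 2

/-- Membership in the space `E_λ`. -/
def MemE [Group G] (S : Finset G) (a : G → ℝ) (lam : ℝ) (u : G → ℝ) : Prop :=
  Summable (eDensity S a lam u)

/-- `‖u‖²_{E_λ}`. -/
def normEsq [Group G] (S : Finset G) (a : G → ℝ) (lam : ℝ) (u : G → ℝ) : ℝ :=
  ∑' x, eDensity S a lam u x

/-- `‖u‖_{E_λ}`. -/
def normE [Group G] (S : Finset G) (a : G → ℝ) (lam : ℝ) (u : G → ℝ) : ℝ :=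
  Real.sqrt (normEsq S a lam u)

/-- The inner product `⟨u, v⟩_{E_λ}`. -/
def innerE [Group G] (S : Finset G) (a : G → ℝ) (lam : ℝ) (u v : G → ℝ) : ℝ :=
  ∑' x, (lap S u x * lap S v x + grad S u v x + (1 + lam * a x) * (u x * v x))

/-- The nonlocal term `Σ_G (R_α ∗ |u|^p)|u|^p`. -/
def Dterm [DecidableEq G] (R : G → G → ℝ) (p : ℝ) (u : G → ℝ) : ℝ :=
  ∑' x, conv R (fun y => |u y| ^ p) x * |u x| ^ p

/-- The nonlocal pairing `Σ_G (R_α ∗ |u|^p)|u|^{p-2} u v`. -/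
def Kterm [DecidableEq G] (R : G → G → ℝ) (p : ℝ) (u v : G → ℝ) : ℝ :=
  ∑' x, conv R (fun y => |u y| ^ p) x * (|u x| ^ (p - 2) * u x * v x)

/-- The energy functional `J_λ`. -/
def Jfun [Group G] [DecidableEq G] (S : Finset G) (a : G → ℝ) (lam : ℝ)
    (R : G → G → ℝ) (p : ℝ) (u : G → ℝ) : ℝ :=
  (1 / 2) * normEsq S a lam u - (1 / (2 * p)) * Dterm R p u

/-- The derivative pairing `(J'_λ(u), v)`. -/
def Jd [Group G] [DecidableEq G] (S : Finset G) (a : G → ℝ) (lam : ℝ)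
    (R : G → G → ℝ) (p : ℝ) (u v : G → ℝ) : ℝ :=
  innerE S a lam u v - Kterm R p u v

/-- The Nehari manifold `N_λ`. -/
def nehari [Group G] [DecidableEq G] (S : Finset G) (a : G → ℝ) (lam : ℝ)
    (R : G → G → ℝ) (p : ℝ) : Set (G → ℝ) :=
  {u | MemE S a lam u ∧ u ≠ 0 ∧ Jd S a lam R p u u = 0}

/-- `m_λ = inf_{N_λ} J_λ`. -/
def mlam [Group G] [DecidableEq G] (S : Finset G) (a : G → ℝ) (lam : ℝ)
    (R : G → G → ℝ) (p : ℝ) : ℝ :=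
  sInf (Jfun S a lam R p '' nehari S a lam R p)

/-- The norm of `J'_λ(u)` in the dual space `E_λ*`. -/
def dualNorm [Group G] [DecidableEq G] (S : Finset G) (a : G → ℝ) (lam : ℝ)
    (R : G → G → ℝ) (p : ℝ) (u : G → ℝ) : ℝ :=
  sSup {t : ℝ | ∃ v, MemE S a lam v ∧ normEsq S a lam v ≤ 1 ∧ t = |Jd S a lam R p u v|}

/-- `(PS)_c` sequence for `J_λ`. -/
def PSseq [Group G] [DecidableEq G] (S : Finset G) (a : G → ℝ) (lam : ℝ)
    (R : G → G → ℝ) (p : ℝ) (c : ℝ) (U : ℕ → G → ℝ) : Prop :=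
  (∀ n, MemE S a lam (U n)) ∧
  Tendsto (fun n => Jfun S a lam R p (U n)) atTop (nhds c) ∧
  Tendsto (fun n => dualNorm S a lam R p (U n)) atTop (nhds 0)

/-- The Cayley graph of `(G, S)`. -/
def cayley [Group G] (S : Finset G) : SimpleGraph G :=
  SimpleGraph.fromRel (fun x y => x⁻¹ * y ∈ S)

/-- Condition (A₁): the potential well `Ω = {a = 0}` is nonempty, finite and connected. -/
def CondA1 [Group G] (S : Finset G) (a : G → ℝ) : Prop :=
  {x | a x = 0}.Nonempty ∧ {x | a x = 0}.Finite ∧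
  ((cayley S).induce {x | a x = 0}).Connected

/-- Condition (A₂): some sublevel set `{a ≤ M}` is finite and nonempty. -/
def CondA2 (a : G → ℝ) : Prop :=
  ∃ M : ℝ, 0 < M ∧ {x | a x ≤ M}.Finite ∧ {x | a x ≤ M}.Nonempty

/-- The density `|Δu|² + |∇u|² + u²` of the `W^{2,2}` norm. -/
def wDensity [Group G] (S : Finset G) (u : G → ℝ) (x : G) : ℝ :=
  (lap S u x) ^ 2 + grad S u u x + (u x) ^ 2

/-- Membership in `W^{2,2}(G)`. -/
def MemW [Group G] (S : Finset G) (u : G → ℝ) : Prop := Summable (wDensity S u)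

/-- `‖u‖²_{W^{2,2}}`. -/
def normWsq [Group G] (S : Finset G) (u : G → ℝ) : ℝ := ∑' x, wDensity S u x

/-- Membership in `E(Ω)`: vanishing outside `Ω`. -/
def MemEOm (Ω : Set G) (u : G → ℝ) : Prop := ∀ x ∉ Ω, u x = 0

/-- `‖u‖²_{E(Ω)}`. -/
def normOmSq [Group G] (S : Finset G) (Ω : Set G) (u : G → ℝ) : ℝ :=
  (∑' x, ((lap S u x) ^ 2 + grad S u u x)) + ∑' x : Ω, (u (x : G)) ^ 2

/-- The nonlocal term over `Ω`. -/
def DtermOm [DecidableEq G] (Ω : Set G) (R : G → G → ℝ) (p : ℝ) (u : G → ℝ) : ℝ :=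
  ∑' x : Ω, conv R (fun y => |u y| ^ p) (x : G) * |u (x : G)| ^ p

/-- The limiting energy functional `J_Ω`. -/
def JOm [Group G] [DecidableEq G] (S : Finset G) (Ω : Set G) (R : G → G → ℝ) (p : ℝ)
    (u : G → ℝ) : ℝ :=
  (1 / 2) * normOmSq S Ω u - (1 / (2 * p)) * DtermOm Ω R p u

/-- The derivative pairing `(J'_Ω(u), v)`. -/
def JdOm [Group G] [DecidableEq G] (S : Finset G) (Ω : Set G) (R : G → G → ℝ) (p : ℝ)
    (u v : G → ℝ) : ℝ :=
  (∑' x, (lap S u x * lap S v x + grad S u v x)) + (∑' x : Ω, u (x : G) * v (x : G))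
    - ∑' x : Ω, conv R (fun y => |u y| ^ p) (x : G) * (|u (x : G)| ^ (p - 2) * u (x : G) * v (x : G))

/-- The Nehari manifold `N_Ω`. -/
def nehariOm [Group G] [DecidableEq G] (S : Finset G) (Ω : Set G) (R : G → G → ℝ)
    (p : ℝ) : Set (G → ℝ) :=
  {u | MemEOm Ω u ∧ u ≠ 0 ∧ JdOm S Ω R p u u = 0}

/-- `m_Ω = inf_{N_Ω} J_Ω`. -/
def mOm [Group G] [DecidableEq G] (S : Finset G) (Ω : Set G) (R : G → G → ℝ) (p : ℝ) : ℝ :=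
  sInf (JOm S Ω R p '' nehariOm S Ω R p)

/-!
A Palais–Smale sequence at a level at most `c*` is bounded in `E_λ` by a constant independent of
`λ`, because `J - J'/(2p)` is a positive multiple of `‖·‖²`. A subsequence `Vₙ` therefore converges
pointwise to some `u`, which lies in `E_λ` by Fatou. For `wₙ = Vₙ - u`,
`‖wₙ‖² = J'(Vₙ)wₙ - ⟨u, wₙ⟩ + ∑ (R ∗ |Vₙ|^p) |Vₙ|^(p-2) Vₙ wₙ`,
where the first two terms tend to `0`. By the Hardy–Littlewood–Sobolev inequality and the pointwise
convergence, the nonlocal term is at most `B ‖wₙ‖₂² + o(1)` with `B` independent of `λ`. Off the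
finite set `{a ≤ M}` the weight `1 + λa` exceeds `2B` once `λ` is large, so half of `‖wₙ‖²` absorbs
that part of `B ‖wₙ‖₂²`; on the finite set `wₙ` tends to `0` pointwise.
-/

open scoped Topology

section WeightedHolder

variable {ι : Type*}

lemma tsum_rpow_mul_rpow_le (f g : ι → ℝ≥0∞) {a b : ℝ} (ha : 0 ≤ a) (hb : 0 ≤ b)
    (hab : a + b = 1) :
    ∑' x, f x ^ a * g x ^ b ≤ (∑' x, f x) ^ a * (∑' x, g x) ^ b := by
  let _ : MeasurableSpace ι := ⊤
  simpa only [MeasureTheory.lintegral_count] using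
    ENNReal.lintegral_mul_norm_pow_le (μ := MeasureTheory.Measure.count) (f := f) (g := g)
      measurable_from_top.aemeasurable measurable_from_top.aemeasurable ha hb hab

lemma tsum_rpow_mul_rpow_mul_rpow_le (f g h : ι → ℝ≥0∞) {a b c : ℝ} (ha : 0 ≤ a) (hb : 0 ≤ b)
    (hc : 0 ≤ c) (habc : a + b + c = 1) :
    ∑' x, f x ^ a * g x ^ b * h x ^ c ≤
      (∑' x, f x) ^ a * (∑' x, g x) ^ b * (∑' x, h x) ^ c := by
  let _ : MeasurableSpace ι := ⊤
  simpa [Fin.prod_univ_three, MeasureTheory.lintegral_count] using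
    ENNReal.lintegral_prod_norm_pow_le (μ := MeasureTheory.Measure.count) Finset.univ
      (f := ![f, g, h]) (fun i _ => measurable_from_top.aemeasurable)
      (p := ![a, b, c]) (by simpa [Fin.sum_univ_three] using habc)
      (by intro i _; fin_cases i <;> simpa)

lemma tsum_mul_le_rpow_mul_rpow {s t : ℝ} (hst : s.HolderConjugate t) (f g : ι → ℝ≥0∞) :
    ∑' x, f x * g x ≤ (∑' x, f x ^ s) ^ s⁻¹ * (∑' x, g x ^ t) ^ t⁻¹ := by
  simpa only [ENNReal.rpow_rpow_inv hst.ne_zero, ENNReal.rpow_rpow_inv hst.symm.ne_zero] using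
    tsum_rpow_mul_rpow_le (fun x => f x ^ s) (fun x => g x ^ t) hst.inv_nonneg
      hst.symm.inv_nonneg hst.inv_add_inv_eq_one

lemma rpow_eq_mul_rpow_sub_one (b : ℝ≥0∞) {r : ℝ} (hr : 1 ≤ r) : b ^ r = b * b ^ (r - 1) := by
  rw [← add_sub_cancel 1 r, ENNReal.rpow_add_of_nonneg _ _ zero_le_one (sub_nonneg.2 hr),
    ENNReal.rpow_one, add_sub_cancel]

lemma tsum_rpow_le_rpow_tsum (f : ι → ℝ≥0∞) {r : ℝ} (hr : 1 ≤ r) :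
    ∑' x, f x ^ r ≤ (∑' x, f x) ^ r := by
  have : 0 ≤ r - 1 := sub_nonneg.2 hr
  calc ∑' x, f x ^ r
      = ∑' x, f x * f x ^ (r - 1) := tsum_congr fun x => rpow_eq_mul_rpow_sub_one _ hr
    _ ≤ ∑' x, f x * (∑' y, f y) ^ (r - 1) := by gcongr with x; exact ENNReal.le_tsum x
    _ = (∑' x, f x) ^ r := by rw [ENNReal.tsum_mul_right, ← rpow_eq_mul_rpow_sub_one _ hr]

lemma tsum_rpow_le_tsum_sq_rpow (f : ι → ℝ≥0∞) {q : ℝ} (hq : 2 ≤ q) :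
    ∑' x, f x ^ q ≤ (∑' x, f x ^ 2) ^ (q / 2) := by
  convert tsum_rpow_le_rpow_tsum (fun x => f x ^ 2) (show 1 ≤ q / 2 by linarith) using 2
  ext x
  rw [← ENNReal.rpow_natCast_mul]
  congr 1
  push_cast
  ring

lemma tendsto_rpow_nhds_zero {f : ι → ℝ≥0∞} {l : Filter ι} {r : ℝ} (hr : 0 < r)
    (hf : Tendsto f l (𝓝 0)) : Tendsto (fun x => f x ^ r) l (𝓝 0) := by
  have := ((ENNReal.continuous_rpow_const (y := r)).tendsto 0).comp hf
  rwa [ENNReal.zero_rpow_of_pos hr] at this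

/-- Off a large finite set, Hölder's inequality bounds the sum uniformly in `n`. -/
lemma tendsto_tsum_mul_nhds_zero {s t : ℝ} (hst : s.HolderConjugate t) {h : ι → ℝ≥0∞}
    (hh : ∑' x, h x ^ s ≠ ⊤) {g : ℕ → ι → ℝ≥0∞} {C : ℝ≥0∞} (hC : C ≠ ⊤)
    (hgC : ∀ n, ∑' x, g n x ^ t ≤ C) (hg : ∀ x, Tendsto (fun n => g n x) atTop (𝓝 0)) :
    Tendsto (fun n => ∑' x, h x * g n x) atTop (𝓝 0) := by
  have htail : Tendsto (fun F : Finset ι => (∑' x : {x // x ∉ F}, h x ^ s) ^ s⁻¹ * C ^ t⁻¹)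
      atTop (𝓝 0) := by
    simpa using ENNReal.Tendsto.mul_const
      (tendsto_rpow_nhds_zero hst.inv_pos (ENNReal.tendsto_tsum_compl_atTop_zero hh))
      (Or.inr (ENNReal.rpow_ne_top_of_nonneg hst.symm.inv_nonneg hC))
  refine ENNReal.tendsto_nhds_zero.2 fun ε hε => ?_
  obtain ⟨F, hF⟩ := (ENNReal.tendsto_nhds_zero.1 htail (ε / 2) (ENNReal.half_pos hε.ne')).exists
  have hhead : Tendsto (fun n => ∑ x ∈ F, h x * g n x) atTop (𝓝 0) := by
    have hx (x : ι) : h x ≠ ⊤ := fun hx =>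
      ENNReal.ne_top_of_tsum_ne_top hh x (by simp [hx, hst.pos])
    simpa using tendsto_finsetSum F fun x _ => ENNReal.Tendsto.const_mul (hg x) (Or.inr (hx x))
  filter_upwards [ENNReal.tendsto_nhds_zero.1 hhead (ε / 2) (ENNReal.half_pos hε.ne')] with n hn
  calc ∑' x, h x * g n x
      = ∑ x ∈ F, h x * g n x + ∑' x : {x // x ∉ F}, h x * g n x :=
        (ENNReal.sum_add_tsum_compl F _).symm
    _ ≤ ε / 2 + (∑' x : {x // x ∉ F}, h x ^ s) ^ s⁻¹ * (∑' x : {x // x ∉ F}, g n x ^ t) ^ t⁻¹ := by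
        gcongr
        exact tsum_mul_le_rpow_mul_rpow hst (fun x : {x // x ∉ F} => h x) fun x => g n x
    _ ≤ ε / 2 + (∑' x : {x // x ∉ F}, h x ^ s) ^ s⁻¹ * C ^ t⁻¹ := by
        have := hst.symm.inv_nonneg
        gcongr
        exact (ENNReal.tsum_comp_le_tsum_of_injective Subtype.val_injective
          fun x => g n x ^ t).trans (hgC n)
    _ ≤ ε := (add_le_add_right hF _).trans (ENNReal.add_halves ε).le

end WeightedHolder

section Interaction

variable {ι : Type*} {κ : ι → ι → ℝ≥0∞} {s t : ℝ} {A : ℝ≥0∞}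

/-- Schur's condition: all rows and columns of the kernel `κ` have `ℓ^r` mass at most `A`. -/
structure SchurBound (κ : ι → ι → ℝ≥0∞) (r : ℝ) (A : ℝ≥0∞) : Prop where
  row : ∀ x, ∑' y, κ x y ^ r ≤ A
  col : ∀ y, ∑' x, κ x y ^ r ≤ A

/-- The potential of the density `f` with respect to the kernel `κ`. -/
def potential (κ : ι → ι → ℝ≥0∞) (f : ι → ℝ≥0∞) (x : ι) : ℝ≥0∞ := ∑' y, κ x y * f y

/-- The mutual energy `∑ₓ∑ᵧ κ x y f(y) g(x)` of two densities. -/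
def interaction (κ : ι → ι → ℝ≥0∞) (f g : ι → ℝ≥0∞) : ℝ≥0∞ := ∑' x, potential κ f x * g x

lemma potential_rpow_le (hst : s.HolderConjugate t) (ht : 2 ≤ t) (hκ : SchurBound κ (t / 2) A)
    (f : ι → ℝ≥0∞) (x : ι) :
    potential κ f x ^ t ≤
      (∑' y, κ x y ^ (t / 2) * f y ^ s) * A * (∑' y, f y ^ s) ^ (t - 2) := by
  have ht0 : 0 < t := hst.symm.pos
  have hc : 0 ≤ (t - 2) / t := div_nonneg (by linarith) ht0.le
  have hsplit (y : ι) : κ x y * f y =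
      (κ x y ^ (t / 2) * f y ^ s) ^ t⁻¹ * (κ x y ^ (t / 2)) ^ t⁻¹ * (f y ^ s) ^ ((t - 2) / t) := by
    have hκ_exp : t / 2 * t⁻¹ + t / 2 * t⁻¹ = 1 := by field_simp; norm_num
    have hf_exp : s * t⁻¹ + s * ((t - 2) / t) = 1 := by
      have := hst.mul_eq_add
      field_simp
      linarith
    have ht' := hst.symm.inv_nonneg
    rw [ENNReal.mul_rpow_of_nonneg _ _ ht', mul_right_comm (_ ^ _), mul_assoc]
    simp only [← ENNReal.rpow_mul]
    rw [← ENNReal.rpow_add_of_nonneg _ _ (by positivity) (by positivity),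
      ← ENNReal.rpow_add_of_nonneg _ _ (mul_nonneg hst.nonneg ht') (mul_nonneg hst.nonneg hc),
      hκ_exp, hf_exp, ENNReal.rpow_one, ENNReal.rpow_one]
  have hHolder : potential κ f x ≤ (∑' y, κ x y ^ (t / 2) * f y ^ s) ^ t⁻¹ * A ^ t⁻¹ *
      (∑' y, f y ^ s) ^ ((t - 2) / t) := by
    have ht' := hst.symm.inv_nonneg
    calc potential κ f x = _ := tsum_congr hsplit
      _ ≤ _ := tsum_rpow_mul_rpow_mul_rpow_le _ _ _ ht' ht' hc (by field_simp; ring)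
      _ ≤ _ := by gcongr; exact hκ.row x
  calc potential κ f x ^ t ≤ _ := ENNReal.rpow_le_rpow hHolder ht0.le
    _ = _ := by
      simp only [ENNReal.mul_rpow_of_nonneg _ _ ht0.le, ENNReal.rpow_inv_rpow ht0.ne',
        ← ENNReal.rpow_mul, div_mul_cancel₀ _ ht0.ne']

/-- Young's inequality. -/
lemma tsum_potential_rpow_le (hst : s.HolderConjugate t) (ht : 2 ≤ t)
    (hκ : SchurBound κ (t / 2) A) (f : ι → ℝ≥0∞) :
    ∑' x, potential κ f x ^ t ≤ A ^ 2 * (∑' y, f y ^ s) ^ (t - 1) := by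
  have hsum : ∑' x, ∑' y, κ x y ^ (t / 2) * f y ^ s ≤ A * ∑' y, f y ^ s := by
    rw [ENNReal.tsum_comm, ← ENNReal.tsum_mul_left]
    simp only [ENNReal.tsum_mul_right]
    gcongr with y
    exact hκ.col y
  calc ∑' x, potential κ f x ^ t
      ≤ ∑' x, (∑' y, κ x y ^ (t / 2) * f y ^ s) * A * (∑' y, f y ^ s) ^ (t - 2) := by
        gcongr with x; exact potential_rpow_le hst ht hκ f x
    _ ≤ (A * ∑' y, f y ^ s) * A * (∑' y, f y ^ s) ^ (t - 2) := by
        rw [ENNReal.tsum_mul_right, ENNReal.tsum_mul_right]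
        gcongr
    _ = A ^ 2 * ((∑' y, f y ^ s) ^ (1 : ℝ) * (∑' y, f y ^ s) ^ (t - 2)) := by
        rw [ENNReal.rpow_one]; ring
    _ = A ^ 2 * (∑' y, f y ^ s) ^ (t - 1) := by
        rw [← ENNReal.rpow_add_of_nonneg _ _ zero_le_one (by linarith)]
        ring_nf

/-- The Hardy–Littlewood–Sobolev inequality. -/
lemma interaction_le (hst : s.HolderConjugate t) (ht : 2 ≤ t) (hκ : SchurBound κ (t / 2) A)
    (f g : ι → ℝ≥0∞) :
    interaction κ f g ≤ A ^ (2 / t) * (∑' x, f x ^ s) ^ s⁻¹ * (∑' x, g x ^ s) ^ s⁻¹ := by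
  have ht' := hst.symm.inv_nonneg
  have hs_exp : (t - 1) * t⁻¹ = s⁻¹ := by
    rw [sub_mul, mul_inv_cancel₀ hst.symm.ne_zero, one_mul, hst.symm.one_sub_inv]
  calc interaction κ f g
      ≤ (∑' x, potential κ f x ^ t) ^ t⁻¹ * (∑' x, g x ^ s) ^ s⁻¹ :=
        tsum_mul_le_rpow_mul_rpow hst.symm _ _
    _ ≤ (A ^ 2 * (∑' y, f y ^ s) ^ (t - 1)) ^ t⁻¹ * (∑' x, g x ^ s) ^ s⁻¹ := by
        gcongr; exact tsum_potential_rpow_le hst ht hκ f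
    _ = A ^ (2 / t) * (∑' x, f x ^ s) ^ s⁻¹ * (∑' x, g x ^ s) ^ s⁻¹ := by
        rw [ENNReal.mul_rpow_of_nonneg _ _ ht', ← ENNReal.rpow_natCast_mul, ← ENNReal.rpow_mul,
          hs_exp, div_eq_mul_inv, Nat.cast_ofNat]

lemma interaction_mono {f f' g g' : ι → ℝ≥0∞} (hf : ∀ x, f x ≤ f' x) (hg : ∀ x, g x ≤ g' x) :
    interaction κ f g ≤ interaction κ f' g' := by
  unfold interaction potential
  gcongr with x y
  exacts [hf y, hg x]

lemma interaction_const_mul_left (c : ℝ≥0∞) (f g : ι → ℝ≥0∞) :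
    interaction κ (fun x => c * f x) g = c * interaction κ f g := by
  simp only [interaction, potential, mul_left_comm _ c, ENNReal.tsum_mul_left, mul_assoc]

lemma interaction_const_mul_right (c : ℝ≥0∞) (f g : ι → ℝ≥0∞) :
    interaction κ f (fun x => c * g x) = c * interaction κ f g := by
  simp only [interaction, mul_left_comm _ c, ENNReal.tsum_mul_left]

lemma interaction_add_left (f f' g : ι → ℝ≥0∞) :
    interaction κ (fun x => f x + f' x) g = interaction κ f g + interaction κ f' g := by
  simp only [interaction, potential, mul_add, ENNReal.tsum_add, add_mul]

lemma interaction_add_right (f g g' : ι → ℝ≥0∞) :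
    interaction κ f (fun x => g x + g' x) = interaction κ f g + interaction κ f g' := by
  simp only [interaction, mul_add, ENNReal.tsum_add]

end Interaction

section PowerInteraction

variable {ι : Type*} {κ : ι → ι → ℝ≥0∞} {s t p : ℝ} {A : ℝ≥0∞}

lemma add_rpow_le_two_rpow_mul (b c : ℝ≥0∞) {r : ℝ} (hr : 0 ≤ r) :
    (b + c) ^ r ≤ 2 ^ r * (b ^ r + c ^ r) := by
  calc (b + c) ^ r ≤ (2 * max b c) ^ r := by
        gcongr
        rw [two_mul]
        exact add_le_add (le_max_left b c) (le_max_right b c)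
    _ = 2 ^ r * max (b ^ r) (c ^ r) := by
        rw [ENNReal.mul_rpow_of_nonneg _ _ hr, (ENNReal.monotone_rpow_of_nonneg hr).map_max]
    _ ≤ 2 ^ r * (b ^ r + c ^ r) := by gcongr; exact max_le_add_of_nonneg zero_le zero_le

lemma rpow_sub_one_mul_le (b c : ℝ≥0∞) (hp : 1 ≤ p) : b ^ (p - 1) * c ≤ b ^ p + c ^ p := by
  have : 0 ≤ p - 1 := sub_nonneg.2 hp
  calc b ^ (p - 1) * c ≤ max b c ^ (p - 1) * max b c := by
        gcongr
        exacts [le_max_left b c, le_max_right b c]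
    _ = max (b ^ p) (c ^ p) := by
        rw [mul_comm, ← rpow_eq_mul_rpow_sub_one _ hp,
          (ENNReal.monotone_rpow_of_nonneg (zero_le_one.trans hp)).map_max]
    _ ≤ b ^ p + c ^ p := max_le_add_of_nonneg zero_le zero_le

lemma tsum_rpow_rpow_le (hps : 2 ≤ p * s) (f : ι → ℝ≥0∞) :
    ∑' x, (f x ^ p) ^ s ≤ (∑' x, f x ^ 2) ^ (p * s / 2) := by
  simpa only [ENNReal.rpow_mul] using tsum_rpow_le_tsum_sq_rpow f hps

lemma interaction_rpow_le (hst : s.HolderConjugate t) (ht : 2 ≤ t)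
    (hκ : SchurBound κ (t / 2) A) (hps : 2 ≤ p * s) (f g : ι → ℝ≥0∞) :
    interaction κ (fun x => f x ^ p) (fun x => g x ^ p) ≤
      A ^ (2 / t) * (∑' x, f x ^ 2) ^ (p / 2) * (∑' x, g x ^ 2) ^ (p / 2) := by
  have hnorm (h : ι → ℝ≥0∞) : (∑' x, (h x ^ p) ^ s) ^ s⁻¹ ≤ (∑' x, h x ^ 2) ^ (p / 2) := by
    refine (ENNReal.rpow_le_rpow (tsum_rpow_rpow_le hps h) hst.inv_nonneg).trans_eq ?_
    rw [← ENNReal.rpow_mul]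
    congr 1
    have := hst.ne_zero
    field_simp
  refine (interaction_le hst ht hκ _ _).trans ?_
  gcongr <;> exact hnorm _

lemma interaction_rpow_sub_one_mul_le (hst : s.HolderConjugate t) (ht : 2 ≤ t)
    (hκ : SchurBound κ (t / 2) A) (hp : 1 ≤ p) (hps : 2 ≤ p * s) (f g : ι → ℝ≥0∞) :
    interaction κ (fun x => f x ^ p) (fun x => f x ^ (p - 1) * g x) ≤
      A ^ (2 / t) * (∑' x, f x ^ 2) ^ (p / 2) *
        ((∑' x, f x ^ 2) ^ (p / 2) + (∑' x, g x ^ 2) ^ (p / 2)) := by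
  calc interaction κ (fun x => f x ^ p) (fun x => f x ^ (p - 1) * g x)
      ≤ interaction κ (fun x => f x ^ p) (fun x => f x ^ p + g x ^ p) :=
        interaction_mono (fun _ => le_rfl) fun x => rpow_sub_one_mul_le _ _ hp
    _ = interaction κ (fun x => f x ^ p) (fun x => f x ^ p) +
          interaction κ (fun x => f x ^ p) (fun x => g x ^ p) := interaction_add_right _ _ _
    _ ≤ _ := by
        rw [mul_add]
        exact add_le_add (interaction_rpow_le hst ht hκ hps f f)
          (interaction_rpow_le hst ht hκ hps f g)

lemma tendsto_interaction_nhds_zero (hst : s.HolderConjugate t) (ht : 2 ≤ t)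
    (hκ : SchurBound κ (t / 2) A) (hA : A ≠ ⊤) {f : ι → ℝ≥0∞} (hf : ∑' x, f x ^ s ≠ ⊤)
    {g : ℕ → ι → ℝ≥0∞} {C : ℝ≥0∞} (hC : C ≠ ⊤) (hgC : ∀ n, ∑' x, g n x ^ s ≤ C)
    (hg : ∀ x, Tendsto (fun n => g n x) atTop (𝓝 0)) :
    Tendsto (fun n => interaction κ f (g n)) atTop (𝓝 0) := by
  refine tendsto_tsum_mul_nhds_zero hst.symm (ne_top_of_le_ne_top ?_
    (tsum_potential_rpow_le hst ht hκ f)) hC hgC hg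
  exact ENNReal.mul_ne_top (ENNReal.pow_ne_top hA)
    (ENNReal.rpow_ne_top_of_nonneg hst.symm.sub_one_pos.le hf)

lemma tendsto_tsum_rpow_sub_one_mul_rpow (hs : 0 < s) (hp : 1 < p) (hps : 2 ≤ p * s)
    {u : ι → ℝ≥0∞} (hu : ∑' x, u x ^ 2 ≠ ⊤) {w : ℕ → ι → ℝ≥0∞} {L : ℝ≥0∞} (hL : L ≠ ⊤)
    (hwL : ∀ n, ∑' x, w n x ^ 2 ≤ L) (hw : ∀ x, Tendsto (fun n => w n x) atTop (𝓝 0)) :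
    Tendsto (fun n => ∑' x, (u x ^ (p - 1) * w n x) ^ s) atTop (𝓝 0) := by
  have hps0 : 0 ≤ p * s / 2 := by linarith
  have hpq : (p / (p - 1)).HolderConjugate p := (Real.HolderConjugate.conjExponent hp).symm
  have hweak := tendsto_tsum_mul_nhds_zero hpq (h := fun x => (u x ^ (p - 1)) ^ s)
    (g := fun n x => w n x ^ s) (C := L ^ (p * s / 2)) ?_ (ENNReal.rpow_ne_top_of_nonneg hps0 hL)
    (fun n => ?_) fun x => ?_
  · simpa only [← ENNReal.mul_rpow_of_nonneg _ _ hs.le] using hweak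
  · have hexp (x : ι) : ((u x ^ (p - 1)) ^ s) ^ (p / (p - 1)) = (u x ^ p) ^ s := by
      simp only [← ENNReal.rpow_mul]
      congr 1
      have : p - 1 ≠ 0 := (sub_pos.2 hp).ne'
      field_simp
    simp only [hexp]
    exact ne_top_of_le_ne_top (ENNReal.rpow_ne_top_of_nonneg hps0 hu) (tsum_rpow_rpow_le hps u)
  · simp only [← ENNReal.rpow_mul, mul_comm s p]
    simp only [ENNReal.rpow_mul]
    exact (tsum_rpow_rpow_le hps _).trans (by gcongr; exact hwL n)
  · exact tendsto_rpow_nhds_zero hs (hw x)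

lemma tendsto_interaction_rpow_sub_one_mul (hst : s.HolderConjugate t) (ht : 2 ≤ t)
    (hκ : SchurBound κ (t / 2) A) (hA : A ≠ ⊤) (hp : 1 < p) (hps : 2 ≤ p * s)
    {u : ι → ℝ≥0∞} {V w : ℕ → ι → ℝ≥0∞} {L : ℝ≥0∞} (hL : L ≠ ⊤)
    (hu : ∑' x, u x ^ 2 ≠ ⊤) (hVL : ∀ n, ∑' x, V n x ^ 2 ≤ L) (hwL : ∀ n, ∑' x, w n x ^ 2 ≤ L)
    (hw : ∀ x, Tendsto (fun n => w n x) atTop (𝓝 0)) :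
    Tendsto (fun n => interaction κ (fun x => V n x ^ p) fun x => u x ^ (p - 1) * w n x)
      atTop (𝓝 0) := by
  have hs := hst.inv_pos
  have hps0 : 0 ≤ p * s / 2 := by linarith
  have hlim := tendsto_rpow_nhds_zero hs
    (tendsto_tsum_rpow_sub_one_mul_rpow hst.pos hp hps hu hL hwL hw)
  have hconst : A ^ (2 / t) * (L ^ (p * s / 2)) ^ s⁻¹ ≠ ⊤ :=
    ENNReal.mul_ne_top (ENNReal.rpow_ne_top_of_nonneg (div_nonneg zero_le_two hst.symm.nonneg) hA)
      (ENNReal.rpow_ne_top_of_nonneg hs.le (ENNReal.rpow_ne_top_of_nonneg hps0 hL))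
  have hbound := ENNReal.Tendsto.const_mul hlim (Or.inr hconst)
  rw [mul_zero] at hbound
  refine tendsto_of_tendsto_of_tendsto_of_le_of_le tendsto_const_nhds hbound
    (fun _ => zero_le) fun n => (interaction_le hst ht hκ _ _).trans ?_
  gcongr
  exact (tsum_rpow_rpow_le hps _).trans (by gcongr; exact hVL n)

lemma interaction_rpow_sub_one_mul_le_of_le_add (hst : s.HolderConjugate t) (ht : 2 ≤ t)
    (hκ : SchurBound κ (t / 2) A) (hp : 1 ≤ p) (hps : 2 ≤ p * s) {u v w : ι → ℝ≥0∞}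
    (hv : ∀ x, v x ≤ u x + w x) :
    interaction κ (fun x => v x ^ p) (fun x => v x ^ (p - 1) * w x) ≤
      2 ^ (p - 1) * (interaction κ (fun x => v x ^ p) (fun x => u x ^ (p - 1) * w x) +
        2 ^ p * (interaction κ (fun x => u x ^ p) (fun x => w x ^ p) +
          A ^ (2 / t) * (∑' x, w x ^ 2) ^ p)) := by
  have hp0 : 0 ≤ p := zero_le_one.trans hp
  have hright (x : ι) : v x ^ (p - 1) * w x ≤ 2 ^ (p - 1) * (u x ^ (p - 1) * w x + w x ^ p) := by
    rw [rpow_eq_mul_rpow_sub_one (w x) hp, mul_comm (w x), ← add_mul, ← mul_assoc]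
    have hp' : 0 ≤ p - 1 := sub_nonneg.2 hp
    gcongr
    exact (ENNReal.rpow_le_rpow (hv x) hp').trans (add_rpow_le_two_rpow_mul _ _ hp')
  have hleft (x : ι) : v x ^ p ≤ 2 ^ p * (u x ^ p + w x ^ p) :=
    (ENNReal.rpow_le_rpow (hv x) hp0).trans (add_rpow_le_two_rpow_mul _ _ hp0)
  have hself : interaction κ (fun x => w x ^ p) (fun x => w x ^ p) ≤
      A ^ (2 / t) * (∑' x, w x ^ 2) ^ p := by
    refine (interaction_rpow_le hst ht hκ hps w w).trans_eq ?_
    rw [mul_assoc, ← ENNReal.rpow_add_of_nonneg _ _ (by positivity) (by positivity), add_halves]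
  refine (interaction_mono (fun _ => le_rfl) hright).trans ?_
  rw [interaction_const_mul_right, interaction_add_right]
  gcongr
  refine (interaction_mono hleft fun _ => le_rfl).trans ?_
  rw [interaction_const_mul_left, interaction_add_left]
  gcongr

/-- Only the self-interaction of `w` survives in the limit: the terms that pair `u` with the
pointwise null sequence `w` vanish. -/
lemma exists_tendsto_interaction_le (hst : s.HolderConjugate t) (ht : 2 ≤ t)
    (hκ : SchurBound κ (t / 2) A) (hA : A ≠ ⊤) (hp : 1 < p) (hps : 2 ≤ p * s)
    {u : ι → ℝ≥0∞} {V w : ℕ → ι → ℝ≥0∞} {L : ℝ≥0∞} (hL : L ≠ ⊤) (hu : ∑' x, u x ^ 2 ≠ ⊤)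
    (hVL : ∀ n, ∑' x, V n x ^ 2 ≤ L) (hwL : ∀ n, ∑' x, w n x ^ 2 ≤ L)
    (hV : ∀ n x, V n x ≤ u x + w n x) (hw : ∀ x, Tendsto (fun n => w n x) atTop (𝓝 0)) :
    ∃ e : ℕ → ℝ≥0∞, Tendsto e atTop (𝓝 0) ∧ ∀ n,
      interaction κ (fun x => V n x ^ p) (fun x => V n x ^ (p - 1) * w n x) ≤
        e n + 2 ^ (p - 1) * 2 ^ p * A ^ (2 / t) * L ^ (p - 1) * ∑' x, w n x ^ 2 := by
  have hp0 : 0 < p := zero_lt_one.trans hp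
  have hps0 : 0 ≤ p * s / 2 := by linarith
  have hcross := tendsto_interaction_rpow_sub_one_mul hst ht hκ hA hp hps hL hu hVL hwL hw
  have hpair : Tendsto (fun n => interaction κ (fun x => u x ^ p) fun x => w n x ^ p)
      atTop (𝓝 0) := by
    refine tendsto_interaction_nhds_zero hst ht hκ hA
      (ne_top_of_le_ne_top (ENNReal.rpow_ne_top_of_nonneg hps0 hu) (tsum_rpow_rpow_le hps u))
      (ENNReal.rpow_ne_top_of_nonneg hps0 hL)
      (fun n => (tsum_rpow_rpow_le hps _).trans (by gcongr; exact hwL n))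
      fun x => tendsto_rpow_nhds_zero hp0 (hw x)
  have htwo (r : ℝ) (hr : 0 ≤ r) : (2 : ℝ≥0∞) ^ r ≠ ⊤ :=
    ENNReal.rpow_ne_top_of_nonneg hr ENNReal.ofNat_ne_top
  refine ⟨_, by simpa using ENNReal.Tendsto.const_mul (hcross.add (ENNReal.Tendsto.const_mul hpair
    (Or.inr (htwo p hp0.le)))) (Or.inr (htwo (p - 1) (by linarith))), fun n => ?_⟩
  have hself : (∑' x, w n x ^ 2) ^ p ≤ L ^ (p - 1) * ∑' x, w n x ^ 2 := by
    rw [rpow_eq_mul_rpow_sub_one _ hp.le, mul_comm]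
    gcongr
    exact hwL n
  refine (interaction_rpow_sub_one_mul_le_of_le_add hst ht hκ hp.le hps (hV n)).trans ?_
  grw [hself]
  exact le_of_eq (by ring)

end PowerInteraction

section NonlocalTerm

variable {ι : Type*} [DecidableEq ι] {R : ι → ι → ℝ} {p : ℝ}

/-- The kernel `|R|` with its diagonal, which `conv` omits, set to zero. -/
def offDiag (R : ι → ι → ℝ) (x y : ι) : ℝ≥0∞ := if y = x then 0 else ‖R x y‖ₑ

/-- The condition on a kernel `R` and an exponent `p > 1` under which the Hardy–Littlewood–Sobolev
inequality bounds `Dterm R p` on `ℓ²`: for a conjugate pair `s`, `t`, the rows and columns of `R`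
are bounded in `ℓ^(t/2)`, so that `R` acts from `ℓ^s` to its dual `ℓ^t`, and `ℓ²` embeds into
`ℓ^(p s)`. -/
def IsHLSKernel (R : ι → ι → ℝ) (p : ℝ) : Prop :=
  1 < p ∧ ∃ s t : ℝ, s.HolderConjugate t ∧ 2 ≤ t ∧ 2 ≤ p * s ∧
    ∃ A ≠ ⊤, SchurBound (offDiag R) (t / 2) A

/-- The squared `ℓ²` norm, with value `⊤` outside `ℓ²`. -/
def l2Sq (u : ι → ℝ) : ℝ≥0∞ := ∑' x, ‖u x‖ₑ ^ 2

lemma enorm_conv_le (R : ι → ι → ℝ) (f : ι → ℝ) (x : ι) :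
    ‖conv R f x‖ₑ ≤ potential (offDiag R) (fun y => ‖f y‖ₑ) x := by
  refine enorm_tsum_le_tsum_enorm.trans_eq (tsum_congr fun y => ?_)
  by_cases hy : y = x <;> simp [offDiag, hy, enorm_mul]

lemma enorm_abs_rpow_sub_two_mul_self (hp : 1 < p) (b : ℝ) :
    ‖|b| ^ (p - 2) * b‖ₑ = ‖b‖ₑ ^ (p - 1) := by
  rcases eq_or_ne b 0 with rfl | hb
  · simp [ENNReal.zero_rpow_of_pos (sub_pos.2 hp)]
  · have hsplit : |b| ^ (p - 1) = |b| ^ (p - 2) * |b| := by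
      rw [← Real.rpow_add_one (abs_ne_zero.2 hb)]
      ring_nf
    rw [← Real.enorm_abs b, ← Real.enorm_rpow_of_nonneg (abs_nonneg b) (by linarith), hsplit,
      enorm_mul, enorm_mul, Real.enorm_abs]

lemma enorm_Kterm_le (R : ι → ι → ℝ) (hp : 1 < p) (u v : ι → ℝ) :
    ‖Kterm R p u v‖ₑ ≤ interaction (offDiag R) (fun x => ‖u x‖ₑ ^ p)
      fun x => ‖u x‖ₑ ^ (p - 1) * ‖v x‖ₑ := by
  have hpow (y : ι) : ‖|u y| ^ p‖ₑ = ‖u y‖ₑ ^ p := by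
    rw [Real.enorm_rpow_of_nonneg (abs_nonneg _) (by linarith), Real.enorm_abs]
  refine enorm_tsum_le_tsum_enorm.trans (ENNReal.tsum_le_tsum fun x => ?_)
  rw [enorm_mul, enorm_mul, enorm_abs_rpow_sub_two_mul_self hp]
  gcongr
  simpa only [hpow] using enorm_conv_le R (fun y => |u y| ^ p) x

lemma Dterm_eq_Kterm_self (R : ι → ι → ℝ) (hp : p ≠ 0) (u : ι → ℝ) :
    Dterm R p u = Kterm R p u u := by
  refine tsum_congr fun x => congrArg _ ?_
  rcases eq_or_ne (u x) 0 with hx | hx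
  · simp [hx, Real.zero_rpow hp]
  · rw [mul_assoc, ← abs_mul_abs_self, ← mul_assoc, ← Real.rpow_add_one (abs_ne_zero.2 hx),
      ← Real.rpow_add_one (abs_ne_zero.2 hx)]
    ring_nf

lemma Kterm_smul_right (R : ι → ι → ℝ) (p c : ℝ) (u v : ι → ℝ) :
    Kterm R p u (c • v) = c * Kterm R p u v := by
  simp only [Kterm, ← tsum_mul_left, Pi.smul_apply, smul_eq_mul]
  exact tsum_congr fun x => by ring

lemma exists_abs_Kterm_le (hR : IsHLSKernel R p) {u : ι → ℝ} (hu : l2Sq u ≠ ⊤) :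
    ∃ B : ℝ, ∀ v, l2Sq v ≤ 1 → |Kterm R p u v| ≤ B := by
  obtain ⟨hp, s, t, hst, ht, hps, A, hA, hR⟩ := hR
  have hp0 : 0 ≤ p / 2 := by linarith
  have hu' : l2Sq u ^ (p / 2) ≠ ⊤ := ENNReal.rpow_ne_top_of_nonneg hp0 hu
  have hA' : A ^ (2 / t) ≠ ⊤ :=
    ENNReal.rpow_ne_top_of_nonneg (div_nonneg zero_le_two hst.symm.nonneg) hA
  refine ⟨(A ^ (2 / t) * l2Sq u ^ (p / 2) * (l2Sq u ^ (p / 2) + 1)).toReal, fun v hv => ?_⟩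
  have hv' : l2Sq v ^ (p / 2) ≤ 1 := ENNReal.rpow_le_one hv hp0
  rw [← Real.norm_eq_abs, ← toReal_enorm]
  refine ENNReal.toReal_mono (by finiteness) ?_
  grw [enorm_Kterm_le R hp, interaction_rpow_sub_one_mul_le hst ht hR hp.le hps, ← hv']
  rfl

lemma exists_abs_Kterm_sub_le (hR : IsHLSKernel R p) {L : ℝ≥0∞} (hL : L ≠ ⊤) :
    ∃ B : ℝ, 0 ≤ B ∧ ∀ (V : ℕ → ι → ℝ) (u : ι → ℝ), l2Sq u ≠ ⊤ → (∀ n, l2Sq (V n) ≤ L) →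
      (∀ n, l2Sq (V n - u) ≤ L) → (∀ x, Tendsto (fun n => V n x) atTop (𝓝 (u x))) →
      ∃ e : ℕ → ℝ, Tendsto e atTop (𝓝 0) ∧
        ∀ᶠ n in atTop, |Kterm R p (V n) (V n - u)| ≤ e n + B * (l2Sq (V n - u)).toReal := by
  obtain ⟨hp, s, t, hst, ht, hps, A, hA, hR⟩ := hR
  have hp0 : 0 ≤ p - 1 := by linarith
  have hB : 2 ^ (p - 1) * 2 ^ p * A ^ (2 / t) * L ^ (p - 1) ≠ ⊤ := by
    have : 0 ≤ 2 / t := div_nonneg zero_le_two hst.symm.nonneg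
    have : 0 ≤ p := by linarith
    finiteness
  refine ⟨_, ENNReal.toReal_nonneg (a := 2 ^ (p - 1) * 2 ^ p * A ^ (2 / t) * L ^ (p - 1)),
    fun V u hu hVL hwL hVu => ?_⟩
  have hw (x : ι) : Tendsto (fun n => ‖(V n - u) x‖ₑ) atTop (𝓝 0) := by
    simpa using ((hVu x).sub_const (u x)).enorm
  obtain ⟨e, he, hle⟩ := exists_tendsto_interaction_le hst ht hR hA hp hps hL hu hVL hwL
    (fun n x => by simpa using enorm_add_le (u x) ((V n - u) x)) hw
  refine ⟨fun n => (e n).toReal, (ENNReal.tendsto_toReal ENNReal.zero_ne_top).comp he, ?_⟩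
  filter_upwards [he.eventually_lt_const ENNReal.zero_lt_top] with n hn
  have hw_top : l2Sq (V n - u) ≠ ⊤ := ne_top_of_le_ne_top hL (hwL n)
  rw [← ENNReal.toReal_mul, ← ENNReal.toReal_add hn.ne (ENNReal.mul_ne_top hB hw_top),
    ← Real.norm_eq_abs, ← toReal_enorm]
  exact ENNReal.toReal_mono (ENNReal.add_ne_top.2 ⟨hn.ne, ENNReal.mul_ne_top hB hw_top⟩)
    ((enorm_Kterm_le R hp _ _).trans (hle n))

end NonlocalTerm

section RieszKernels

lemma rpow_neg_le_two_rpow_neg_pow_log {n : ℕ} (hn : n ≠ 0) {β : ℝ} (hβ : 0 ≤ β) :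
    (n : ℝ) ^ (-β) ≤ ((2 : ℝ) ^ (-β)) ^ Nat.log 2 n := by
  have hlog : ((2 : ℝ) ^ Nat.log 2 n) ≤ n := mod_cast Nat.pow_log_le_self 2 hn
  calc (n : ℝ) ^ (-β) ≤ ((2 : ℝ) ^ Nat.log 2 n) ^ (-β) :=
        Real.rpow_le_rpow_of_nonpos (by positivity) hlog (neg_nonpos.2 hβ)
    _ = ((2 : ℝ) ^ (-β)) ^ Nat.log 2 n := (Real.rpow_pow_comm zero_le_two _ _).symm

/-- The points are sorted into the dyadic shells `2 ^ k ≤ d < 2 ^ (k + 1)`. -/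
lemma tsum_ofReal_rpow_neg_ne_top {ι : Type*} {d : ι → ℕ} {N : ℕ} {C : ℝ≥0∞} (hC : C ≠ ⊤)
    (hd : ∀ n : ℕ, 1 ≤ n → ({x | d x ≤ n}.encard : ℝ≥0∞) ≤ C * n ^ N) {β : ℝ} (hβ : N < β) :
    ∑' x, ENNReal.ofReal ((d x : ℝ) ^ (-β)) ≠ ⊤ := by
  have hβ0 : 0 < β := N.cast_nonneg.trans_lt hβ
  set q : ℝ≥0∞ := ENNReal.ofReal (2 ^ (-β))
  have hshell (x : ι) : ENNReal.ofReal ((d x : ℝ) ^ (-β)) ≤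
      ∑' k : ℕ, {y | d y ≤ 2 ^ (k + 1)}.indicator (fun _ => q ^ k) x := by
    rcases eq_or_ne (d x) 0 with hx | hx
    · simp [hx, Real.zero_rpow (neg_ne_zero.2 hβ0.ne')]
    · refine le_trans ?_ (ENNReal.le_tsum (Nat.log 2 (d x)))
      rw [Set.indicator_of_mem (show x ∈ {y | d y ≤ _} from
        (Nat.lt_pow_succ_log_self one_lt_two (d x)).le),
        ← ENNReal.ofReal_pow (by positivity)]
      exact ENNReal.ofReal_le_ofReal (rpow_neg_le_two_rpow_neg_pow_log hx hβ0.le)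
  have hratio : q * 2 ^ N < 1 := by
    rw [← ENNReal.ofReal_ofNat 2, ← ENNReal.ofReal_pow zero_le_two,
      ← ENNReal.ofReal_mul (by positivity), ENNReal.ofReal_lt_one, ← Real.rpow_natCast,
      ← Real.rpow_add two_pos]
    exact Real.rpow_lt_one_of_one_lt_of_neg one_lt_two (by linarith)
  refine ne_top_of_le_ne_top (b := C * 2 ^ N * (1 - q * 2 ^ N)⁻¹) ?_ ?_
  · have : 1 - q * 2 ^ N ≠ 0 := (tsub_pos_of_lt hratio).ne'
    finiteness
  calc ∑' x, ENNReal.ofReal ((d x : ℝ) ^ (-β))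
      ≤ ∑' x, ∑' k : ℕ, {y | d y ≤ 2 ^ (k + 1)}.indicator (fun _ => q ^ k) x :=
        ENNReal.tsum_le_tsum hshell
    _ = ∑' k : ℕ, ({y | d y ≤ 2 ^ (k + 1)}.encard : ℝ≥0∞) * q ^ k := by
        rw [ENNReal.tsum_comm]
        exact tsum_congr fun k => by rw [← tsum_subtype, ENNReal.tsum_set_const]
    _ ≤ ∑' k : ℕ, C * 2 ^ N * (q * 2 ^ N) ^ k := by
        refine ENNReal.tsum_le_tsum fun k => ?_
        grw [hd (2 ^ (k + 1)) Nat.one_le_two_pow]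
        refine le_of_eq ?_
        push_cast
        ring
    _ = C * 2 ^ N * (1 - q * 2 ^ N)⁻¹ := by rw [ENNReal.tsum_mul_left, ENNReal.tsum_geometric]

variable [Group G] {S : Finset G} {N : ℕ}

lemma wordDist_eq_wordDist_one (S : Finset G) (x y : G) :
    wordDist S x y = wordDist S (y⁻¹ * x) 1 := by
  simp [wordDist]

lemma PolyGrowth.tsum_wordDist_rpow_neg_ne_top (hS : PolyGrowth S N) {β : ℝ} (hβ : N < β) :
    ∑' z, ENNReal.ofReal ((wordDist S z 1 : ℝ) ^ (-β)) ≠ ⊤ := by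
  obtain ⟨C₁, C₂, hC₁, hC₂, hball⟩ := hS
  refine tsum_ofReal_rpow_neg_ne_top (C := ENNReal.ofReal C₂) ENNReal.ofReal_ne_top
    (fun n hn => ?_) hβ
  have hset : {z | wordDist S z 1 ≤ n} = ball S 1 n := by simp [ball]
  obtain ⟨hlower, hupper⟩ := hball n (mod_cast hn)
  have hcard : 0 < (ball S (1 : G) n).ncard := by
    have : (0 : ℝ) < C₁ * n ^ N := by positivity
    exact_mod_cast this.trans_le hlower
  rw [hset, ← (Set.finite_of_ncard_pos hcard).cast_ncard_eq, ENat.toENNReal_coe,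
    ← ENNReal.ofReal_natCast, ← ENNReal.ofReal_natCast n, ← ENNReal.ofReal_pow n.cast_nonneg,
    ← ENNReal.ofReal_mul hC₂.le]
  exact ENNReal.ofReal_le_ofReal hupper

lemma RieszKernel.exists_schurBound [DecidableEq G] (hS : PolyGrowth S N) {α r : ℝ}
    {R : G → G → ℝ} (hR : RieszKernel S N α R) (hr : 0 < r) (hrN : N < (N - α) * r) :
    ∃ A : ℝ≥0∞, A ≠ ⊤ ∧ SchurBound (offDiag R) r A := by
  obtain ⟨hpos, _, c, -, hc, hRle⟩ := hR
  let weight : G → ℝ≥0∞ := fun z => ENNReal.ofReal ((wordDist S z 1 : ℝ) ^ (-((N - α) * r)))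
  have hle (x y : G) : offDiag R x y ^ r ≤ ENNReal.ofReal (c ^ r) * weight (y⁻¹ * x) := by
    rcases eq_or_ne y x with hyx | hyx
    · simp [offDiag, hyx, ENNReal.zero_rpow_of_pos hr]
    · have hRxy := (hRle x y hyx.symm).2
      rw [wordDist_eq_wordDist_one] at hRxy
      rw [offDiag, if_neg hyx, Real.enorm_of_nonneg (hpos x y).le,
        ENNReal.ofReal_rpow_of_nonneg (hpos x y).le hr.le, ← ENNReal.ofReal_mul (by positivity)]
      refine ENNReal.ofReal_le_ofReal
        ((Real.rpow_le_rpow (hpos x y).le hRxy hr.le).trans_eq ?_)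
      rw [Real.mul_rpow hc.le (by positivity), ← Real.rpow_mul (by positivity)]
      ring_nf
  refine ⟨ENNReal.ofReal (c ^ r) * ∑' z, weight z, ENNReal.mul_ne_top ENNReal.ofReal_ne_top
    (hS.tsum_wordDist_rpow_neg_ne_top hrN), fun x => ?_, fun y => ?_⟩
  all_goals
    refine (ENNReal.tsum_le_tsum fun _ => hle _ _).trans ?_
    rw [ENNReal.tsum_mul_left]
    refine mul_le_mul_right (ENNReal.tsum_comp_le_tsum_of_injective (fun z z' h => ?_) weight) _
    simpa using h

lemma one_lt_of_add_div_lt {N α p : ℝ} (hα : 0 < α) (hαN : α < N) (hp : (N + α) / N < p) :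
    1 < p :=
  lt_trans (by rw [lt_div_iff₀ (hα.trans hαN)]; linarith) hp

/-- `s` is taken between `max 1 (2 / p)` and `2N / (N + α)`; the condition on `p` makes room. -/
lemma exists_holderConjugate_of_lt {N α p : ℝ} (hα : 0 < α) (hαN : α < N) (hp : (N + α) / N < p) :
    ∃ s t : ℝ, s.HolderConjugate t ∧ 2 ≤ t ∧ N < (N - α) * (t / 2) ∧ 2 ≤ p * s := by
  have hN : 0 < N := hα.trans hαN
  have hp1 : 1 < p := one_lt_of_add_div_lt hα hαN hp
  have hroom : max 1 (2 / p) < 2 * N / (N + α) := by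
    rw [div_lt_iff₀ hN] at hp
    refine max_lt ((lt_div_iff₀ (by linarith)).2 (by linarith)) ?_
    rw [div_lt_div_iff₀ (by linarith) (by linarith)]
    linarith
  obtain ⟨s, hs, hsN⟩ := exists_between hroom
  obtain ⟨hs1, hsp⟩ := max_lt_iff.1 hs
  rw [lt_div_iff₀ (by linarith)] at hsN
  have hs2 : s < 2 := by nlinarith
  refine ⟨s, s / (s - 1), .conjExponent hs1, ?_, ?_, ?_⟩
  · rw [le_div_iff₀ (by linarith)]
    linarith
  · rw [div_div, mul_div_assoc', lt_div_iff₀ (by linarith)]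
    linarith
  · rw [mul_comm]
    exact ((div_lt_iff₀ (by linarith)).1 hsp).le

lemma RieszKernel.isHLSKernel [DecidableEq G] (hS : PolyGrowth S N) {α p : ℝ} {R : G → G → ℝ}
    (hR : RieszKernel S N α R) (hα : 0 < α) (hαN : α < N) (hp : (N + α) / N < p) :
    IsHLSKernel R p := by
  obtain ⟨s, t, hst, ht, hNt, hps⟩ := exists_holderConjugate_of_lt hα hαN hp
  exact ⟨one_lt_of_add_div_lt hα hαN hp, s, t, hst, ht, hps,
    hR.exists_schurBound hS (by linarith) hNt⟩

end RieszKernels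

section PosSemidefFamily

variable {ι V : Type*} [AddCommGroup V] [Module ℝ V] {B : ι → LinearMap.BilinForm ℝ V}
  {u v : V}

lemma abs_apply_le_add (hB : ∀ x, (B x).IsPosSemidef) (u v : V) (x : ι) :
    |B x u v| ≤ B x u u + B x v v := by
  have hcs := (B x).apply_mul_apply_le_of_forall_zero_le (hB x).nonneg u v
  rw [(hB x).eq v u] at hcs
  have hu := (hB x).nonneg u
  have hv := (hB x).nonneg v
  exact abs_le_of_sq_le_sq (by nlinarith) (add_nonneg hu hv)

lemma summable_apply (hB : ∀ x, (B x).IsPosSemidef) (hu : Summable fun x => B x u u)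
    (hv : Summable fun x => B x v v) : Summable fun x => B x u v :=
  (hu.add hv).of_norm_bounded (abs_apply_le_add hB u v)

lemma abs_tsum_apply_le (hB : ∀ x, (B x).IsPosSemidef) (hu : Summable fun x => B x u u)
    (hv : Summable fun x => B x v v) :
    |∑' x, B x u v| ≤ ∑' x, B x u u + ∑' x, B x v v := by
  rw [← hu.tsum_add hv]
  exact tsum_of_norm_bounded (f := fun x => B x u v) (hu.add hv).hasSum
    (abs_apply_le_add hB u v)

lemma apply_sub_sub_le (hB : ∀ x, (B x).IsPosSemidef) (u v : V) (x : ι) :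
    B x (u - v) (u - v) ≤ 2 * B x u u + 2 * B x v v := by
  have := (hB x).nonneg (u + v)
  simp only [map_add, map_sub, LinearMap.add_apply, LinearMap.sub_apply] at this ⊢
  linarith

lemma summable_apply_sub (hB : ∀ x, (B x).IsPosSemidef) (hu : Summable fun x => B x u u)
    (hv : Summable fun x => B x v v) : Summable fun x => B x (u - v) (u - v) :=
  .of_nonneg_of_le (fun x => (hB x).nonneg _) (apply_sub_sub_le hB u v)
    ((hu.mul_left 2).add (hv.mul_left 2))

lemma enorm_apply_le (hB : ∀ x, (B x).IsPosSemidef) (u v : V) (x : ι) :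
    ‖B x u v‖ₑ ≤
      ENNReal.ofReal (B x u u) ^ (2⁻¹ : ℝ) * ENNReal.ofReal (B x v v) ^ (2⁻¹ : ℝ) := by
  have hcs := (B x).apply_mul_apply_le_of_forall_zero_le (hB x).nonneg u v
  rw [(hB x).eq v u] at hcs
  have hu := (hB x).nonneg u
  rw [← ENNReal.mul_rpow_of_nonneg _ _ (by norm_num), ← ENNReal.ofReal_mul hu,
    ENNReal.le_rpow_inv_iff two_pos, ENNReal.rpow_two, ← enorm_pow,
    Real.enorm_eq_ofReal (sq_nonneg _)]
  exact ENNReal.ofReal_le_ofReal (by linarith [sq (B x u v)])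

lemma tendsto_tsum_apply_nhds_zero (hB : ∀ x, (B x).IsPosSemidef)
    (hu : Summable fun x => B x u u) {W : ℕ → V} {K : ℝ}
    (hW : ∀ n, Summable fun x => B x (W n) (W n)) (hK : ∀ n, ∑' x, B x (W n) (W n) ≤ K)
    (hW0 : ∀ x, Tendsto (fun n => B x (W n) (W n)) atTop (𝓝 0)) :
    Tendsto (fun n => ∑' x, B x u (W n)) atTop (𝓝 0) := by
  have hsq (w : V) (x : ι) :
      (ENNReal.ofReal (B x w w) ^ (2⁻¹ : ℝ)) ^ (2 : ℝ) = ENNReal.ofReal (B x w w) :=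
    ENNReal.rpow_inv_rpow two_ne_zero _
  have hlim := tendsto_tsum_mul_nhds_zero .two_two
    (h := fun x => ENNReal.ofReal (B x u u) ^ (2⁻¹ : ℝ))
    (g := fun n x => ENNReal.ofReal (B x (W n) (W n)) ^ (2⁻¹ : ℝ))
    (C := ENNReal.ofReal K) (by simpa only [hsq] using hu.tsum_ofReal_ne_top) ENNReal.ofReal_ne_top
    (fun n => by
      simp only [hsq, ← ENNReal.ofReal_tsum_of_nonneg (fun x => (hB x).nonneg _) (hW n)]
      exact ENNReal.ofReal_le_ofReal (hK n))
    (fun x => tendsto_rpow_nhds_zero (by norm_num)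
      (by simpa using ENNReal.tendsto_ofReal (hW0 x)))
  refine tendsto_zero_iff_enorm_tendsto_zero.2 (tendsto_of_tendsto_of_tendsto_of_le_of_le
    tendsto_const_nhds hlim (fun _ => zero_le) fun n => ?_)
  exact enorm_tsum_le_tsum_enorm.trans (ENNReal.tsum_le_tsum fun x => enorm_apply_le hB _ _ x)

end PosSemidefFamily

section Energy

lemma summable_and_tsum_le_of_tendsto {ι : Type*} {f : ℕ → ι → ℝ} {g : ι → ℝ} {K : ℝ}
    (hf0 : ∀ n x, 0 ≤ f n x) (hf : ∀ n, Summable (f n)) (hK : ∀ n, ∑' x, f n x ≤ K)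
    (hfg : ∀ x, Tendsto (fun n => f n x) atTop (𝓝 (g x))) :
    Summable g ∧ ∑' x, g x ≤ K := by
  have hg0 : 0 ≤ g := fun x => ge_of_tendsto' (hfg x) fun n => hf0 n x
  have hsum (F : Finset ι) : ∑ x ∈ F, g x ≤ K :=
    le_of_tendsto' (tendsto_finsetSum F fun x _ => hfg x) fun n =>
      ((hf n).sum_le_tsum F fun x _ => hf0 n x).trans (hK n)
  exact ⟨summable_of_sum_le hg0 hsum, Real.tsum_le_of_sum_le hg0 hsum⟩

variable [Group G] {S : Finset G} {a : G → ℝ} {lam : ℝ} {u v : G → ℝ}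

/-- The density at `x` of the inner product of `E_λ`, as a bilinear form. -/
def energyForm (S : Finset G) (a : G → ℝ) (lam : ℝ) (x : G) : LinearMap.BilinForm ℝ (G → ℝ) :=
  LinearMap.mk₂ ℝ
    (fun u v => lap S u x * lap S v x + grad S u v x + (1 + lam * a x) * (u x * v x))
    (fun u u' v => by
      simp only [lap, grad, Pi.add_apply, add_sub_add_comm, add_mul, Finset.sum_add_distrib]
      ring)
    (fun c u v => by
      simp only [lap, grad, Pi.smul_apply, smul_eq_mul, ← mul_sub, mul_assoc, ← Finset.mul_sum]
      ring)
    (fun u v v' => by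
      simp only [lap, grad, Pi.add_apply, add_sub_add_comm, mul_add, Finset.sum_add_distrib]
      ring)
    (fun c u v => by
      simp only [lap, grad, Pi.smul_apply, smul_eq_mul, ← mul_sub, mul_left_comm _ c,
        ← Finset.mul_sum]
      ring)

lemma energyForm_apply (x : G) (u v : G → ℝ) : energyForm S a lam x u v =
    lap S u x * lap S v x + grad S u v x + (1 + lam * a x) * (u x * v x) := rfl

lemma energyForm_apply_self (x : G) (u : G → ℝ) :
    energyForm S a lam x u u = eDensity S a lam u x := by
  rw [energyForm_apply, eDensity]
  ring

lemma grad_self_nonneg (S : Finset G) (u : G → ℝ) (x : G) : 0 ≤ grad S u u x :=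
  mul_nonneg (by norm_num) (Finset.sum_nonneg fun _ _ => mul_self_nonneg _)

lemma one_add_mul_sq_le_eDensity (u : G → ℝ) (x : G) :
    (1 + lam * a x) * u x ^ 2 ≤ eDensity S a lam u x := by
  rw [eDensity]
  linarith [grad_self_nonneg S u x, sq_nonneg (lap S u x)]

lemma sq_le_eDensity (ha : ∀ x, 0 ≤ lam * a x) (u : G → ℝ) (x : G) :
    u x ^ 2 ≤ eDensity S a lam u x :=
  le_trans (le_mul_of_one_le_left (sq_nonneg _) (by linarith [ha x]))
    (one_add_mul_sq_le_eDensity u x)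

lemma eDensity_nonneg (ha : ∀ x, 0 ≤ lam * a x) (u : G → ℝ) (x : G) :
    0 ≤ eDensity S a lam u x := (sq_nonneg _).trans (sq_le_eDensity ha u x)

lemma normEsq_nonneg (ha : ∀ x, 0 ≤ lam * a x) (u : G → ℝ) : 0 ≤ normEsq S a lam u :=
  tsum_nonneg (eDensity_nonneg ha u)

lemma isPosSemidef_energyForm (ha : ∀ x, 0 ≤ lam * a x) (x : G) :
    (energyForm S a lam x).IsPosSemidef where
  eq u v := by
    simp only [energyForm_apply, grad, mul_comm]
  nonneg u := by
    rw [energyForm_apply_self]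
    exact eDensity_nonneg ha u x

lemma memE_iff : MemE S a lam u ↔ Summable fun x => energyForm S a lam x u u := by
  simp only [energyForm_apply_self]
  rfl

lemma innerE_self (u : G → ℝ) : innerE S a lam u u = normEsq S a lam u :=
  tsum_congr fun x => energyForm_apply_self x u

lemma MemE.sub (ha : ∀ x, 0 ≤ lam * a x) (hu : MemE S a lam u) (hv : MemE S a lam v) :
    MemE S a lam (u - v) :=
  memE_iff.2 (summable_apply_sub (isPosSemidef_energyForm ha) (memE_iff.1 hu) (memE_iff.1 hv))

lemma MemE.smul (c : ℝ) (hu : MemE S a lam u) : MemE S a lam (c • u) := by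
  simpa [memE_iff] using ((memE_iff.1 hu).mul_left c).mul_left c

lemma innerE_smul_right (c : ℝ) (u v : G → ℝ) :
    innerE S a lam u (c • v) = c * innerE S a lam u v := by
  simp only [innerE, ← energyForm_apply, map_smul, smul_eq_mul, tsum_mul_left]

lemma normEsq_smul (c : ℝ) (u : G → ℝ) : normEsq S a lam (c • u) = c ^ 2 * normEsq S a lam u := by
  simp only [normEsq, ← energyForm_apply_self, map_smul, LinearMap.smul_apply, smul_eq_mul,
    tsum_mul_left]
  ring

lemma normEsq_sub_le (ha : ∀ x, 0 ≤ lam * a x) (hu : MemE S a lam u) (hv : MemE S a lam v) :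
    normEsq S a lam (u - v) ≤ 2 * normEsq S a lam u + 2 * normEsq S a lam v := by
  have hu' := Summable.mul_left 2 hu
  have hv' := Summable.mul_left 2 hv
  rw [normEsq, normEsq, normEsq, ← tsum_mul_left, ← tsum_mul_left, ← hu'.tsum_add hv']
  refine (hu.sub ha hv).tsum_le_tsum (fun x => ?_) (hu'.add hv')
  simpa only [energyForm_apply_self] using apply_sub_sub_le (isPosSemidef_energyForm ha) u v x

lemma abs_innerE_le (ha : ∀ x, 0 ≤ lam * a x) (hu : MemE S a lam u) (hv : MemE S a lam v) :
    |innerE S a lam u v| ≤ normEsq S a lam u + normEsq S a lam v := by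
  rw [← innerE_self u, ← innerE_self v]
  exact abs_tsum_apply_le (isPosSemidef_energyForm ha) (memE_iff.1 hu) (memE_iff.1 hv)

lemma normEsq_sub_eq (ha : ∀ x, 0 ≤ lam * a x) (hu : MemE S a lam u) (hv : MemE S a lam v) :
    normEsq S a lam (v - u) = innerE S a lam v (v - u) - innerE S a lam u (v - u) := by
  have hs := memE_iff.1 (hv.sub ha hu)
  have hpos := isPosSemidef_energyForm (S := S) ha
  rw [← innerE_self]
  simp only [innerE, ← energyForm_apply]
  rw [← (summable_apply hpos (memE_iff.1 hv) hs).tsum_sub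
    (summable_apply hpos (memE_iff.1 hu) hs)]
  simp only [← LinearMap.sub_apply, ← map_sub]

lemma summable_sq_of_memE (ha : ∀ x, 0 ≤ lam * a x) (hu : MemE S a lam u) :
    Summable fun x => u x ^ 2 :=
  .of_nonneg_of_le (fun _ => sq_nonneg _) (sq_le_eDensity ha u) hu

lemma sq_le_normEsq (ha : ∀ x, 0 ≤ lam * a x) (hu : MemE S a lam u) (x : G) :
    u x ^ 2 ≤ normEsq S a lam u :=
  (sq_le_eDensity ha u x).trans (hu.le_tsum x fun y _ => eDensity_nonneg ha u y)

lemma l2Sq_eq_ofReal_tsum {ι : Type*} {u : ι → ℝ} (hu : Summable fun x => u x ^ 2) :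
    l2Sq u = ENNReal.ofReal (∑' x, u x ^ 2) := by
  rw [ENNReal.ofReal_tsum_of_nonneg (fun _ => sq_nonneg _) hu]
  exact tsum_congr fun x => by rw [← enorm_pow, Real.enorm_eq_ofReal (sq_nonneg _)]

lemma l2Sq_le_normEsq (ha : ∀ x, 0 ≤ lam * a x) (hu : MemE S a lam u) :
    l2Sq u ≤ ENNReal.ofReal (normEsq S a lam u) := by
  have hsq := summable_sq_of_memE ha hu
  rw [l2Sq_eq_ofReal_tsum hsq]
  exact ENNReal.ofReal_le_ofReal (hsq.tsum_le_tsum (sq_le_eDensity ha u) hu)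

lemma tendsto_eDensity {U : ℕ → G → ℝ} (hU : ∀ x, Tendsto (fun n => U n x) atTop (𝓝 (u x)))
    (x : G) : Tendsto (fun n => eDensity S a lam (U n) x) atTop (𝓝 (eDensity S a lam u x)) := by
  have hcont : Continuous fun w => eDensity S a lam w x := by
    unfold eDensity lap grad
    fun_prop
  exact (hcont.tendsto u).comp (tendsto_pi_nhds.2 hU)

lemma memE_and_normEsq_le_of_tendsto (ha : ∀ x, 0 ≤ lam * a x) {U : ℕ → G → ℝ} {K : ℝ}
    (hU : ∀ n, MemE S a lam (U n)) (hK : ∀ n, normEsq S a lam (U n) ≤ K)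
    (hlim : ∀ x, Tendsto (fun n => U n x) atTop (𝓝 (u x))) :
    MemE S a lam u ∧ normEsq S a lam u ≤ K :=
  summable_and_tsum_le_of_tendsto (fun n => eDensity_nonneg ha (U n)) hU hK
    (tendsto_eDensity hlim)

lemma tendsto_innerE_nhds_zero (ha : ∀ x, 0 ≤ lam * a x) (hu : MemE S a lam u)
    {W : ℕ → G → ℝ} {K : ℝ} (hW : ∀ n, MemE S a lam (W n)) (hK : ∀ n, normEsq S a lam (W n) ≤ K)
    (hlim : ∀ x, Tendsto (fun n => W n x) atTop (𝓝 0)) :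
    Tendsto (fun n => innerE S a lam u (W n)) atTop (𝓝 0) := by
  refine tendsto_tsum_apply_nhds_zero (isPosSemidef_energyForm ha) (memE_iff.1 hu)
    (fun n => memE_iff.1 (hW n)) (K := K) (fun n => ?_) fun x => ?_
  · exact (innerE_self (W n)).trans_le (hK n)
  · have := tendsto_eDensity (S := S) (a := a) (lam := lam) (u := 0) hlim x
    simpa only [← energyForm_apply_self, map_zero] using this

lemma exists_subseq_tendsto [Countable G] (ha : ∀ x, 0 ≤ lam * a x) {U : ℕ → G → ℝ}
    (hU : ∀ n, MemE S a lam (U n)) {K : ℝ} (hK : ∀ᶠ n in atTop, normEsq S a lam (U n) ≤ K) :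
    ∃ φ : ℕ → ℕ, StrictMono φ ∧ (∀ n, normEsq S a lam (U (φ n)) ≤ K) ∧
      ∃ u : G → ℝ, ∀ x, Tendsto (fun n => U (φ n) x) atTop (𝓝 (u x)) := by
  obtain ⟨n₀, hn₀⟩ := eventually_atTop.1 hK
  have hbox (n : ℕ) : U (n + n₀) ∈ Set.univ.pi fun _ => Set.Icc (-√K) √K := fun x _ =>
    abs_le.1 (Real.abs_le_sqrt
      ((sq_le_normEsq ha (hU _) x).trans (hn₀ _ (Nat.le_add_left _ _))))
  obtain ⟨u, -, φ, hφ, hlim⟩ := (isCompact_univ_pi fun _ => isCompact_Icc).tendsto_subseq hbox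
  exact ⟨fun n => φ n + n₀, hφ.add_const n₀, fun n => hn₀ _ (Nat.le_add_left _ _), u,
    tendsto_pi_nhds.1 hlim⟩

lemma mul_tsum_sq_le (ha : ∀ x, 0 ≤ lam * a x) (hu : MemE S a lam u) {F : Finset G} {B : ℝ}
    (hF : ∀ x ∉ F, 2 * B ≤ 1 + lam * a x) :
    B * ∑' x, u x ^ 2 ≤ B * ∑ x ∈ F, u x ^ 2 + normEsq S a lam u / 2 := by
  have hsq := summable_sq_of_memE ha hu
  have htail : 2 * B * ∑' x : {x // x ∉ F}, u x ^ 2 ≤ normEsq S a lam u := by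
    rw [← tsum_mul_left]
    refine (((hsq.subtype _).mul_left _).tsum_le_tsum (fun x => ?_) (hu.subtype _)).trans
      (hu.tsum_subtype_le _ _ (eDensity_nonneg ha u))
    exact (mul_le_mul_of_nonneg_right (hF x x.2) (sq_nonneg _)).trans
      (one_add_mul_sq_le_eDensity u x)
  rw [← hsq.sum_add_tsum_subtype_compl F]
  linarith

end Energy

section PalaisSmale

variable [Group G] [DecidableEq G] {S : Finset G} {a : G → ℝ} {lam p : ℝ} {R : G → G → ℝ}
  {u v : G → ℝ}

lemma Jd_smul_right (c : ℝ) (u v : G → ℝ) :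
    Jd S a lam R p u (c • v) = c * Jd S a lam R p u v := by
  rw [Jd, Jd, innerE_smul_right, Kterm_smul_right, mul_sub]

lemma Jfun_sub_Jd_self (hp : p ≠ 0) (u : G → ℝ) :
    Jfun S a lam R p u - 1 / (2 * p) * Jd S a lam R p u u =
      (1 / 2 - 1 / (2 * p)) * normEsq S a lam u := by
  rw [Jfun, Jd, innerE_self, Dterm_eq_Kterm_self R hp]
  ring

lemma bddAbove_abs_Jd (hR : IsHLSKernel R p) (ha : ∀ x, 0 ≤ lam * a x)
    (hu : MemE S a lam u) :
    BddAbove {r | ∃ v, MemE S a lam v ∧ normEsq S a lam v ≤ 1 ∧ r = |Jd S a lam R p u v|} := by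
  obtain ⟨B, hB⟩ := exists_abs_Kterm_le hR
    (ne_top_of_le_ne_top ENNReal.ofReal_ne_top (l2Sq_le_normEsq ha hu))
  refine ⟨normEsq S a lam u + 1 + B, ?_⟩
  rintro r ⟨v, hv, hv1, rfl⟩
  have hKterm := hB v ((l2Sq_le_normEsq ha hv).trans (ENNReal.ofReal_le_one.2 hv1))
  rw [Jd]
  linarith [abs_sub (innerE S a lam u v) (Kterm R p u v), abs_innerE_le ha hu hv]

lemma abs_Jd_le (hR : IsHLSKernel R p) (ha : ∀ x, 0 ≤ lam * a x)
    (hu : MemE S a lam u) (hv : MemE S a lam v) {L : ℝ} (hL : 0 < L)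
    (hvL : normEsq S a lam v ≤ L) :
    |Jd S a lam R p u v| ≤ √L * dualNorm S a lam R p u := by
  have hsqrt : 0 < √L := Real.sqrt_pos.2 hL
  have hunit : normEsq S a lam ((√L)⁻¹ • v) ≤ 1 := by
    rwa [normEsq_smul, inv_pow, Real.sq_sqrt hL.le, inv_mul_le_one₀ hL]
  have hle : |Jd S a lam R p u ((√L)⁻¹ • v)| ≤ dualNorm S a lam R p u :=
    le_csSup (bddAbove_abs_Jd hR ha hu) ⟨_, hv.smul _, hunit, rfl⟩
  rwa [Jd_smul_right, abs_mul, abs_of_pos (inv_pos.2 hsqrt), inv_mul_le_iff₀ hsqrt] at hle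

lemma tendsto_Jd_nhds_zero (hR : IsHLSKernel R p) (ha : ∀ x, 0 ≤ lam * a x)
    {V W : ℕ → G → ℝ} (hV : ∀ n, MemE S a lam (V n)) (hW : ∀ n, MemE S a lam (W n)) {L : ℝ}
    (hL : 0 < L) (hWL : ∀ n, normEsq S a lam (W n) ≤ L)
    (hdual : Tendsto (fun n => dualNorm S a lam R p (V n)) atTop (𝓝 0)) :
    Tendsto (fun n => Jd S a lam R p (V n) (W n)) atTop (𝓝 0) :=
  squeeze_zero_norm (fun n => abs_Jd_le hR ha (hV n) (hW n) hL (hWL n))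
    (by simpa using hdual.const_mul √L)

lemma normEsq_le_of_dualNorm_le (hR : IsHLSKernel R p) (ha : ∀ x, 0 ≤ lam * a x)
    (hu : MemE S a lam u) (hdual : dualNorm S a lam R p u ≤ 1 / 2 - 1 / (2 * p)) :
    normEsq S a lam u ≤ 2 / (1 / 2 - 1 / (2 * p)) * Jfun S a lam R p u + 1 := by
  have hp : 0 < p := zero_lt_one.trans hR.1
  have hid := Jfun_sub_Jd_self (S := S) (a := a) (lam := lam) (R := R) hp.ne' u
  set E := normEsq S a lam u
  set θ := 1 / 2 - 1 / (2 * p) with hθ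
  have hinv : 0 < 1 / (2 * p) := by positivity
  have hθ0 : 0 < θ := sub_pos.2 (one_div_lt_one_div_of_lt two_pos (by linarith [hR.1]))
  have hE : 0 ≤ E := normEsq_nonneg ha u
  have hJd : |Jd S a lam R p u u| ≤ (E + 1) * θ := by
    refine (abs_Jd_le hR ha hu hu (L := E + 1) (by linarith) (by linarith)).trans ?_
    have hsqrt : √(E + 1) ≤ E + 1 := Real.sqrt_le_iff.2 ⟨by linarith, by nlinarith⟩
    grw [hdual, hsqrt]
  have hhalf : -(1 / (2 * p) * Jd S a lam R p u u) ≤ 1 / 2 * ((E + 1) * θ) := by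
    nlinarith [(abs_le.1 hJd).1, mul_nonneg (by linarith : 0 ≤ E + 1) hθ0.le]
  rw [div_mul_eq_mul_div, ← sub_le_iff_le_add, le_div_iff₀ hθ0]
  linarith

lemma exists_eventually_normEsq_le (hR : IsHLSKernel R p) (cstar : ℝ) :
    ∃ K : ℝ, 0 < K ∧ ∀ lam, (∀ x, 0 ≤ lam * a x) → ∀ c ≤ cstar, ∀ U : ℕ → G → ℝ,
      PSseq S a lam R p c U → ∀ᶠ n in atTop, normEsq S a lam (U n) ≤ K := by
  have hθ : 0 < 1 / 2 - 1 / (2 * p) :=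
    sub_pos.2 (one_div_lt_one_div_of_lt two_pos (by linarith [hR.1]))
  refine ⟨2 / (1 / 2 - 1 / (2 * p)) * (|cstar| + 1) + 1, by positivity, ?_⟩
  rintro lam ha c hc U ⟨hU, hJ, hdual⟩
  have hcstar : c < |cstar| + 1 := by linarith [le_abs_self cstar]
  filter_upwards [hJ.eventually_le_const hcstar, hdual.eventually_le_const hθ] with n hJn hdn
  grw [normEsq_le_of_dualNorm_le hR ha (hU n) hdn, hJn]

/-- Where the potential is large, the energy absorbs the self-interaction of `V n - u`; the
remaining finitely many points contribute nothing in the limit. -/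
lemma tendsto_normEsq_sub_of_abs_Kterm_le (ha : ∀ x, 0 ≤ lam * a x) {V : ℕ → G → ℝ}
    (hV : ∀ n, MemE S a lam (V n)) (hu : MemE S a lam u) {L : ℝ}
    (hL : ∀ n, normEsq S a lam (V n - u) ≤ L)
    (hlim : ∀ x, Tendsto (fun n => (V n - u) x) atTop (𝓝 0))
    (hJd : Tendsto (fun n => Jd S a lam R p (V n) (V n - u)) atTop (𝓝 0))
    {e : ℕ → ℝ} (he : Tendsto e atTop (𝓝 0)) {B : ℝ}
    (hKterm : ∀ᶠ n in atTop,
      |Kterm R p (V n) (V n - u)| ≤ e n + B * ∑' x, (V n - u) x ^ 2)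
    {F : Finset G} (hF : ∀ x ∉ F, 2 * B ≤ 1 + lam * a x) :
    Tendsto (fun n => normEsq S a lam (V n - u)) atTop (𝓝 0) := by
  have hW (n : ℕ) : MemE S a lam (V n - u) := (hV n).sub ha hu
  have hinner := tendsto_innerE_nhds_zero ha hu hW hL hlim
  have hF0 : Tendsto (fun n => ∑ x ∈ F, (V n - u) x ^ 2) atTop (𝓝 0) := by
    simpa using tendsto_finsetSum F fun x _ => (hlim x).pow 2
  refine squeeze_zero' (.of_forall fun n => normEsq_nonneg ha _) ?_
    (by simpa only [sub_zero, mul_zero, add_zero] using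
      (((hJd.sub hinner).add he).add (hF0.const_mul B)).const_mul 2)
  filter_upwards [hKterm] with n hn
  have hdecomp := normEsq_sub_eq ha hu (hV n)
  have hJdn : Jd S a lam R p (V n) (V n - u) = _ - _ := rfl
  linarith [le_abs_self (Kterm R p (V n) (V n - u)), mul_tsum_sq_le ha (hW n) hF]

lemma exists_abs_Kterm_sub_le_of_normEsq_le (hR : IsHLSKernel R p) (L : ℝ) :
    ∃ B : ℝ, 0 ≤ B ∧ ∀ lam, (∀ x, 0 ≤ lam * a x) → ∀ (V : ℕ → G → ℝ) (u : G → ℝ),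
      (∀ n, MemE S a lam (V n)) → MemE S a lam u → (∀ n, normEsq S a lam (V n) ≤ L) →
      (∀ n, normEsq S a lam (V n - u) ≤ L) →
      (∀ x, Tendsto (fun n => V n x) atTop (𝓝 (u x))) →
      ∃ e : ℕ → ℝ, Tendsto e atTop (𝓝 0) ∧ ∀ᶠ n in atTop,
        |Kterm R p (V n) (V n - u)| ≤ e n + B * ∑' x, (V n - u) x ^ 2 := by
  obtain ⟨B, hB, hKterm⟩ := exists_abs_Kterm_sub_le hR (ENNReal.ofReal_ne_top (r := L))
  refine ⟨B, hB, fun lam ha V u hV hu hVL hWL hlim => ?_⟩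
  have hW (n : ℕ) : MemE S a lam (V n - u) := (hV n).sub ha hu
  have hl2 (n : ℕ) : (l2Sq (V n - u)).toReal = ∑' x, (V n - u) x ^ 2 := by
    rw [l2Sq_eq_ofReal_tsum (summable_sq_of_memE ha (hW n)),
      ENNReal.toReal_ofReal (tsum_nonneg fun _ => sq_nonneg _)]
  simpa only [hl2] using hKterm V u
    (ne_top_of_le_ne_top ENNReal.ofReal_ne_top (l2Sq_le_normEsq ha hu))
    (fun n => (l2Sq_le_normEsq ha (hV n)).trans (ENNReal.ofReal_le_ofReal (hVL n)))
    (fun n => (l2Sq_le_normEsq ha (hW n)).trans (ENNReal.ofReal_le_ofReal (hWL n))) hlim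

theorem PS_condition_large_lambda_general [Countable G] (hR : IsHLSKernel R p)
    (ha : ∀ x, 0 ≤ a x) {M : ℝ} (hM : 0 < M) (hfin : {x | a x ≤ M}.Finite) (cstar : ℝ) :
    ∃ lamstar : ℝ, 0 < lamstar ∧
      ∀ lam : ℝ, lamstar ≤ lam → ∀ c : ℝ, c ≤ cstar → ∀ U : ℕ → G → ℝ,
        PSseq S a lam R p c U →
        ∃ φ : ℕ → ℕ, StrictMono φ ∧ ∃ u : G → ℝ, MemE S a lam u ∧
          Tendsto (fun n => normEsq S a lam (U (φ n) - u)) atTop (𝓝 0) := by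
  obtain ⟨K, hK, hbound⟩ := exists_eventually_normEsq_le (S := S) (a := a) hR cstar
  obtain ⟨B, hB, hKterm⟩ :=
    exists_abs_Kterm_sub_le_of_normEsq_le (S := S) (a := a) hR (4 * K)
  refine ⟨(2 * B + 1) / M, by positivity, fun lam hlam c hc U hU => ?_⟩
  have hlam0 : 0 ≤ lam := le_trans (by positivity) hlam
  have hla (x : G) : 0 ≤ lam * a x := mul_nonneg hlam0 (ha x)
  obtain ⟨φ, hφ, hUK, u, hlim⟩ := exists_subseq_tendsto hla hU.1 (hbound lam hla c hc U hU)
  have hV (n : ℕ) : MemE S a lam (U (φ n)) := hU.1 (φ n)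
  obtain ⟨hu, huK⟩ := memE_and_normEsq_le_of_tendsto hla hV hUK hlim
  have hWK (n : ℕ) : normEsq S a lam (U (φ n) - u) ≤ 4 * K := by
    linarith [normEsq_sub_le hla (hV n) hu, hUK n]
  obtain ⟨e, he, hKe⟩ := hKterm lam hla (fun n => U (φ n)) u hV hu
    (fun n => (hUK n).trans (by linarith)) hWK hlim
  have hJd := tendsto_Jd_nhds_zero hR hla hV (fun n => (hV n).sub hla hu)
    (by positivity) hWK (hU.2.2.comp hφ.tendsto_atTop)
  refine ⟨φ, hφ, u, hu, tendsto_normEsq_sub_of_abs_Kterm_le hla hV hu hWK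
    (fun x => by simpa using (hlim x).sub_const (u x)) hJd he hKe (F := hfin.toFinset)
    fun x hx => ?_⟩
  have hMx : M < a x := by simpa using hx
  rw [div_le_iff₀ hM] at hlam
  linarith [mul_le_mul_of_nonneg_left hMx.le hlam0]

end PalaisSmale

theorem PS_condition_large_lambda
    {G : Type*} [Group G] [Countable G] [DecidableEq G]
    (S : Finset G) (hSsymm : ∀ s ∈ S, s⁻¹ ∈ S)
    (hSgen : Subgroup.closure (S : Set G) = ⊤)
    (N : ℕ) (hN : 2 ≤ N) (hgrowth : PolyGrowth S N)
    (α : ℝ) (hα0 : 0 < α) (hαN : α < (N : ℝ))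
    (R : G → G → ℝ) (hR : RieszKernel S N α R)
    (p : ℝ) (hp : ((N : ℝ) + α) / (N : ℝ) < p)
    (a : G → ℝ) (ha : ∀ x, 0 ≤ a x)
    (hA1 : CondA1 S a) (hA2 : CondA2 a) :
    ∀ cstar : ℝ, 0 < cstar → ∃ lamstar : ℝ, 0 < lamstar ∧
      ∀ lam : ℝ, lamstar ≤ lam → ∀ c : ℝ, c ≤ cstar → ∀ U : ℕ → G → ℝ,
        PSseq S a lam R p c U →
        ∃ φ : ℕ → ℕ, StrictMono φ ∧ ∃ u : G → ℝ, MemE S a lam u ∧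
          Tendsto (fun n => normEsq S a lam (U (φ n) - u)) atTop (nhds 0) := by
  obtain ⟨M, hM, hfin, -⟩ := hA2
  exact fun cstar _ => PS_condition_large_lambda_general
    (hR.isHLSKernel hgrowth hα0 hαN hp) ha hM hfin cstar

end Choquard
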